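/- arXiv:1306.4791 — 2 statements merged into one kernel-verified Lean document; each statement's English description precedes it below -/
import Mathlib

section
/- Let K be a unique factorization domain of characteristic p > 0. If d is a K-derivation of K[x,y] such that d(x), d(y) are coprime (gcd(d(x), d(y)) is a unit), d* = 0, and K[x,y]^d ≠ K[x^p, y^p], then d is a Jacobian derivation, i.e. d = d_f for some f ∈ K[x,y]. -/
open MvPolynomial

/-!
Write `a = d x`, `b = d y` and `ω = b dx - a dy`. Zero divergence says that `ω` is closed, and
`d = d_f` says that `ω = df`. In characteristic `p` a closed form is exact up to its Cartier
part: there is `f` with `ω = df - B x^(p-1) dx + A y^(p-1) dy`, where `B = ∂x^(p-1) b` and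
`A = ∂y^(p-1) a` are killed by both partial derivatives, hence by `d`. It remains to show
`A = B = 0`.

The operator `d^p` is again a derivation. A constant `h` of `d` outside `K[x^p, y^p]` has
`dh ≠ 0` and is killed by both `d` and `d^p`, so these two derivations are proportional and
`ω(d^p) = 0`. Since also `ω(d) = 0`, Katz's formula
`D^(p-1) (x^(p-1) D x) = x^(p-1) D^p x - (D x)^p` (`iterate_pow_pred_mul`), applied with `D = d`
to `x` and to `y`, gives `B a^p = A b^p`. By coprimality `b^p ∣ B = ∂x^(p-1) b` and
`a^p ∣ A = ∂y^(p-1) a`, which for degree reasons forces `A = B = 0`.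
-/

/-! ### Iterates of a derivation in characteristic `p` -/

/-- The higher Leibniz rule. -/
theorem iterate_derivation_mul {R A : Type*} [CommRing R] [CommRing A] [Algebra R A]
    (D : Derivation R A A) (n : ℕ) (a b : A) :
    D^[n] (a * b) =
      ∑ ij ∈ Finset.HasAntidiagonal.antidiagonal n, (n.choose ij.1 : A) * (D^[ij.1] a * D^[ij.2] b) := by
  induction n with
  | zero => simp
  | succ n ih =>
    rw [Finset.sum_antidiagonal_choose_succ_mul (fun i j => D^[i] a * D^[j] b),
      Function.iterate_succ_apply', ih, map_sum, ← Finset.sum_add_distrib]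
    refine Finset.sum_congr rfl fun ij hij => ?_
    rw [← Nat.choose_symm_of_eq_add (Finset.HasAntidiagonal.mem_antidiagonal.1 hij).symm]
    simp only [Derivation.leibniz, Derivation.map_natCast, smul_eq_mul,
      Function.iterate_succ_apply', mul_zero, add_zero]
    ring

theorem iterate_char_mul {R A : Type*} [CommRing R] [CommRing A] [Algebra R A]
    (p : ℕ) [hp : Fact p.Prime] [CharP A p] (D : Derivation R A A) (a b : A) :
    D^[p] (a * b) = a * D^[p] b + b * D^[p] a := by
  obtain ⟨n, hn⟩ : ∃ n, p = n + 1 := ⟨p - 1, by have := hp.out.pos; omega⟩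
  rw [iterate_derivation_mul, Finset.Nat.sum_antidiagonal_eq_sum_range_succ_mk]
  rw [Finset.sum_range_succ, hn, Finset.sum_range_succ', ← hn, Finset.sum_eq_zero]
  · simp; ring
  · intro k hk
    have : p ∣ p.choose (k + 1) :=
      hp.out.dvd_choose_self (by omega) (by have := Finset.mem_range.1 hk; omega)
    simp [(CharP.cast_eq_zero_iff A p _).2 this]

/-- In characteristic `p` the `p`-th iterate of a derivation is again a derivation. -/
def frobDerivation {R A : Type*} [CommRing R] [CommRing A] [Algebra R A]
    (p : ℕ) [Fact p.Prime] [CharP A p] (D : Derivation R A A) : Derivation R A A :=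
  Derivation.mk' (D.toLinearMap ^ p) fun a b => by
    simpa [Module.End.pow_apply] using iterate_char_mul p D a b

theorem frobDerivation_apply {R A : Type*} [CommRing R] [CommRing A] [Algebra R A]
    (p : ℕ) [Fact p.Prime] [CharP A p] (D : Derivation R A A) (a : A) :
    frobDerivation p D a = D^[p] a := by
  simp [frobDerivation, Module.End.pow_apply]

theorem iterate_const_mul {R A : Type*} [CommRing R] [CommRing A] [Algebra R A]
    (D : Derivation R A A) {c : A} (hc : D c = 0) (n : ℕ) (a : A) :
    D^[n] (c * a) = c * D^[n] a := by
  induction n with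
  | zero => simp
  | succ n ih => simp [Function.iterate_succ_apply', ih, hc]

theorem iterate_derivation_sum {R A ι : Type*} [CommRing R] [CommRing A] [Algebra R A]
    (D : Derivation R A A) (n : ℕ) (s : Finset ι) (g : ι → A) :
    D^[n] (∑ i ∈ s, g i) = ∑ i ∈ s, D^[n] (g i) := by
  have := map_sum (D.toLinearMap ^ n) g s
  simp only [Module.End.pow_apply] at this
  exact this

theorem factorial_pred_char (A : Type*) [CommRing A] (p : ℕ) [Fact p.Prime] [CharP A p] :
    ((p - 1).factorial : A) = -1 := by
  have := congrArg (ZMod.castHom (dvd_refl p) A) (ZMod.wilsons_lemma p)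
  rwa [map_natCast, map_neg, map_one] at this

/-! ### Katz's formula -/

/-- Modulo `x - t`, with `t` a constant of `D`, the only surviving term of `D^n ((x - t)^n w)`
is the one in which every factor `x - t` is differentiated once. -/
theorem map_iterate_sub_pow_mul {R A B : Type*} [CommRing R] [CommRing A] [CommRing B]
    [Algebra R B] (D : Derivation R B B) (ε : B →+* A) {x t : B} (ht : D t = 0)
    (hε : ε x = ε t) (n : ℕ) (w : B) :
    ε (D^[n] ((x - t) ^ n * w)) = n.factorial * ε (D x) ^ n * ε w := by
  induction n generalizing w with
  | zero => simp
  | succ n ih =>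
    have : D ((x - t) ^ (n + 1) * w) =
        (x - t) ^ n * ((n + 1 : ℕ) * D x * w + (x - t) * D w) := by
      simp [Derivation.leibniz_pow, ht]
      ring
    rw [Function.iterate_succ_apply, this, ih, Nat.factorial_succ]
    simp [hε]
    ring

theorem sub_pow_pred_char {A : Type*} [CommRing A] [IsDomain A] (p : ℕ) [hp : Fact p.Prime]
    [CharP A p] {x y : A} (hxy : x - y ≠ 0) :
    (x - y) ^ (p - 1) = ∑ i ∈ Finset.range p, x ^ i * y ^ (p - 1 - i) := by
  apply mul_right_cancel₀ hxy
  rw [Commute.geom_sum₂_mul (Commute.all x y), ← pow_succ, Nat.sub_add_cancel hp.out.one_le,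
    sub_pow_char]

/-- This is `map_iterate_sub_pow_mul` for `n = p - 1` in `A[t]`, with `D` acting on coefficients
and evaluation at `t = x`: in characteristic `p`, `(x - t)^(p-1) = ∑ x^i t^(p-1-i)` and
`(p-1)! = -1`. -/
theorem sum_pow_mul_iterate {R A : Type*} [CommRing R] [CommRing A] [IsDomain A] [Algebra R A]
    (p : ℕ) [hp : Fact p.Prime] [CharP A p] (D : Derivation R A A) (x z : A) :
    ∑ i ∈ Finset.range p, D^[p - 1] (x ^ i * z) * x ^ (p - 1 - i) = - (D x ^ (p - 1) * z) := by
  let _ : Differential A := ⟨D.restrictScalars ℤ⟩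
  have hD (a : A) : (Differential.deriv a) = D a := rfl
  let D' : Derivation ℤ (Polynomial A) (Polynomial A) := Differential.mapCoeffs
  have hX : D' Polynomial.X = 0 := Differential.mapCoeffs_X
  have hC (a : A) : D' (Polynomial.C a) = Polynomial.C (D a) := Differential.mapCoeffs_C a
  have hCn (n : ℕ) (a : A) : D'^[n] (Polynomial.C a) = Polynomial.C (D^[n] a) := by
    induction n with
    | zero => rfl
    | succ n ih => rw [Function.iterate_succ_apply', ih, hC, Function.iterate_succ_apply']
  have key := map_iterate_sub_pow_mul D' (Polynomial.evalRingHom x) (x := Polynomial.C x) hX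
    (by simp) (p - 1) (Polynomial.C z)
  rw [sub_pow_pred_char p (by
      rw [← neg_sub, neg_ne_zero]; exact Polynomial.X_sub_C_ne_zero x), Finset.sum_mul,
    iterate_derivation_sum, map_sum, factorial_pred_char] at key
  convert key using 1
  · refine Finset.sum_congr rfl fun i _ => ?_
    have : Polynomial.C x ^ i * Polynomial.X ^ (p - 1 - i) * Polynomial.C z =
        Polynomial.X ^ (p - 1 - i) * Polynomial.C (x ^ i * z) := by
      rw [Polynomial.C_mul, Polynomial.C_pow]; ring
    rw [this, iterate_const_mul D' (by simp [Derivation.leibniz_pow, hX]), hCn]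
    rw [map_mul, mul_comm]
    simp
  · simp [hC]

/-- Katz's formula for the form `x^(p-1) dx`. In the identity `sum_pow_mul_iterate` with
`z = D x`, each term `i < p - 1` has `x^i D x = D (x^(i+1)) / (i+1)`, so it equals
`x^(p-1) D^p x` because `D^p` is a derivation; the term `i = p - 1` is the left-hand side here. -/
theorem iterate_pow_pred_mul {R A : Type*} [CommRing R] [CommRing A] [IsDomain A] [Algebra R A]
    (p : ℕ) [hp : Fact p.Prime] [CharP A p] (D : Derivation R A A) (x : A) :
    D^[p - 1] (x ^ (p - 1) * D x) = x ^ (p - 1) * D^[p] x - D x ^ p := by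
  have key := sum_pow_mul_iterate p D x (D x)
  obtain ⟨n, hn⟩ : ∃ n, p = n + 1 := ⟨p - 1, by have := hp.out.pos; omega⟩
  have hn1 : p - 1 = n := by omega
  have hp0 : (n : A) + 1 = 0 := by
    have := CharP.cast_eq_zero A p
    rw [hn] at this
    exact_mod_cast this
  rw [hn1] at key ⊢
  have hpow : D x ^ n * D x = D x ^ p := by rw [hn, pow_succ]
  have hterm : ∀ i ∈ Finset.range n, D^[n] (x ^ i * D x) * x ^ (n - i) = x ^ n * D^[p] x := by
    intro i hi
    have hi := Finset.mem_range.1 hi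
    have hne : ((i + 1 : ℕ) : A) ≠ 0 := by
      rw [Ne, CharP.cast_eq_zero_iff A p]
      exact fun h => by have := Nat.le_of_dvd (by omega) h; omega
    have h1 : D^[p] (x ^ (i + 1)) = ((i + 1 : ℕ) : A) * D^[n] (x ^ i * D x) := by
      rw [← iterate_const_mul D (Derivation.map_natCast D _), hn, Function.iterate_succ_apply]
      simp [Derivation.leibniz_pow]
    have h2 : D^[p] (x ^ (i + 1)) = ((i + 1 : ℕ) : A) * (x ^ i * D^[p] x) := by
      rw [← frobDerivation_apply, ← frobDerivation_apply]
      simp [Derivation.leibniz_pow]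
    rw [mul_left_cancel₀ hne (h1.symm.trans h2), mul_right_comm, ← pow_add,
      Nat.add_sub_cancel' hi.le]
  rw [show Finset.range p = Finset.range (n + 1) by rw [hn], Finset.sum_range_succ,
    Finset.sum_congr rfl hterm, hpow] at key
  simp only [Finset.sum_const, Finset.card_range, nsmul_eq_mul, Nat.sub_self, pow_zero,
    mul_one] at key
  linear_combination key - x ^ n * D^[p] x * hp0

/-! ### Antiderivatives in characteristic `p` -/

/-- Integration in characteristic `p`: when `D x = 1`, every `g` is a derivative up to the
obstruction `x^(p-1) D^(p-1) g`. The antiderivative is the iterated partial integration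
`∑_{k=1}^{p-1} (-1)^(k-1) x^k / k! D^(k-1) g`, where `(-1)^(k-1) / k!` is written as `(p-1-k)!`
(equal in characteristic `p`) and the sum is indexed by `j = k - 1`. -/
theorem exists_antideriv {R A : Type*} [CommRing R] [CommRing A] [Algebra R A]
    (p : ℕ) [hp : Fact p.Prime] [CharP A p] (D : Derivation R A A) {x : A} (hx : D x = 1)
    (g : A) :
    ∃ F, D F = g + x ^ (p - 1) * D^[p - 1] g ∧
      ∀ E : Derivation R A A, (∀ a, E (D a) = D (E a)) → E x = 0 → E g = 0 → E F = 0 := by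
  refine ⟨∑ j ∈ Finset.range (p - 1),
    ((p - 2 - j).factorial : A) * (x ^ (j + 1) * D^[j] g), ?_, ?_⟩
  · have hterm : ∀ j ∈ Finset.range (p - 1),
        D (((p - 2 - j).factorial : A) * (x ^ (j + 1) * D^[j] g)) =
        ((p - 1 - (j + 1)).factorial : A) * (x ^ (j + 1) * D^[j + 1] g) -
        ((p - 1 - j).factorial : A) * (x ^ j * D^[j] g) := by
      intro j hj
      have hj := Finset.mem_range.1 hj
      obtain ⟨m, hm⟩ : ∃ m, p = m + j + 2 := ⟨p - 2 - j, by omega⟩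
      have hp0 : (m : A) + j + 2 = 0 := by
        have := CharP.cast_eq_zero A p
        rw [hm] at this
        exact_mod_cast this
      rw [show p - 2 - j = m by omega, show p - 1 - (j + 1) = m by omega,
        show p - 1 - j = m + 1 by omega, Nat.factorial_succ, Function.iterate_succ_apply']
      simp only [Derivation.leibniz, Derivation.leibniz_pow, Derivation.map_natCast, hx,
        smul_eq_mul, nsmul_eq_mul, mul_zero, add_zero, Nat.add_sub_cancel]
      push_cast
      linear_combination (m.factorial : A) * x ^ j * D^[j] g * hp0
    rw [map_sum, Finset.sum_congr rfl hterm, Finset.sum_range_sub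
      (fun j => ((p - 1 - j).factorial : A) * (x ^ j * D^[j] g))]
    simp [factorial_pred_char]
    ring
  · intro E hcomm hEx hEg
    rw [map_sum]
    refine Finset.sum_eq_zero fun j _ => ?_
    have : E (D^[j] g) = 0 := by
      rw [(Function.Commute.iterate_right (f := E) (g := D) hcomm j).eq, hEg,
        iterate_map_zero]
    simp [Derivation.leibniz_pow, hEx, this]

/-! ### Partial derivatives in two variables -/

theorem pderiv_comm {K : Type*} [CommRing K] (i j : Fin 2) (g : MvPolynomial (Fin 2) K) :
    pderiv i (pderiv j g) = pderiv j (pderiv i g) := by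
  have : ⁅(pderiv i : Derivation K (MvPolynomial (Fin 2) K) (MvPolynomial (Fin 2) K)),
      (pderiv j : Derivation K (MvPolynomial (Fin 2) K) (MvPolynomial (Fin 2) K))⁆ = 0 := by
    refine derivation_ext fun k => ?_
    rw [Derivation.commutator_apply]
    classical
    simp only [pderiv_X, Pi.single_apply]
    split_ifs <;> simp
  have := DFunLike.congr_fun this g
  simpa [Derivation.commutator_apply, sub_eq_zero] using this

theorem derivation_eq_pderiv {K : Type*} [CommRing K]
    (d : Derivation K (MvPolynomial (Fin 2) K) (MvPolynomial (Fin 2) K))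
    (g : MvPolynomial (Fin 2) K) :
    d g = d (X 0) * pderiv 0 g + d (X 1) * pderiv 1 g := by
  have : d = d (X 0) • pderiv 0 + d (X 1) • pderiv 1 := by
    refine derivation_ext fun k => ?_
    fin_cases k <;> simp [pderiv_X]
  conv_lhs => rw [this]
  simp

theorem iterate_pderiv_char {K : Type*} [CommRing K] (p : ℕ) [hp : Fact p.Prime] [CharP K p]
    (i : Fin 2) (g : MvPolynomial (Fin 2) K) : (pderiv i)^[p] g = 0 := by
  have h (k : Fin 2) : (pderiv i)^[p] (X k : MvPolynomial (Fin 2) K) = 0 := by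
    obtain ⟨n, hn⟩ : ∃ n, p = n + 2 := ⟨p - 2, by have := hp.out.two_le; omega⟩
    classical
    rw [hn, Function.iterate_succ_apply, Function.iterate_succ_apply, pderiv_X, Pi.single_apply]
    split_ifs <;> simp [iterate_map_zero]
  rw [← frobDerivation_apply, derivation_eq_pderiv]
  simp [frobDerivation_apply, h]

theorem totalDegree_pderiv_le {K : Type*} [CommRing K] (i : Fin 2)
    (g : MvPolynomial (Fin 2) K) : (pderiv i g).totalDegree ≤ g.totalDegree := by
  refine Finset.sup_le fun m hm => ?_
  rw [mem_support_iff, coeff_pderiv] at hm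
  refine le_trans ?_ (le_totalDegree (mem_support_iff.2 (left_ne_zero_of_mul hm)))
  rw [Finsupp.sum_add_index' (by simp) (by simp)]
  exact Nat.le_add_right _ _

theorem mem_adjoin_of_pderiv_eq_zero {K : Type*} [CommRing K] [IsDomain K] (p : ℕ) [CharP K p]
    {h : MvPolynomial (Fin 2) K} (h0 : pderiv 0 h = 0) (h1 : pderiv 1 h = 0) :
    h ∈ Algebra.adjoin K ({X 0 ^ p, X 1 ^ p} : Set (MvPolynomial (Fin 2) K)) := by
  have hdvd : ∀ m ∈ h.support, ∀ i, p ∣ m i := by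
    intro m hm i
    have hi : pderiv i h = 0 := by fin_cases i <;> assumption
    by_cases hmi : m i = 0
    · simp [hmi]
    have := coeff_pderiv (i := i) h (m - Finsupp.single i 1)
    have hle : Finsupp.single i 1 ≤ m := by
      simpa [Finsupp.single_le_iff] using Nat.one_le_iff_ne_zero.2 hmi
    rw [hi, coeff_zero, tsub_add_cancel_of_le hle, eq_comm, mul_eq_zero] at this
    rw [← CharP.cast_eq_zero_iff K p]
    have h2 := this.resolve_left (mem_support_iff.1 hm)
    have h3 : m i = (m - Finsupp.single i 1 : Fin 2 →₀ ℕ) i + 1 := by simp; omega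
    rw [h3]
    exact_mod_cast h2
  rw [h.as_sum]
  refine sum_mem fun m hm => ?_
  obtain ⟨k, hk⟩ := hdvd m hm 0
  obtain ⟨l, hl⟩ := hdvd m hm 1
  rw [monomial_eq, Finsupp.prod_fintype _ _ (by simp), Fin.prod_univ_two, hk, hl, pow_mul,
    pow_mul, ← algebraMap_eq]
  exact mul_mem (Subalgebra.algebraMap_mem _ _) (mul_mem
    (pow_mem (Algebra.subset_adjoin (by simp)) _) (pow_mem (Algebra.subset_adjoin (by simp)) _))

/-- Partial derivatives do not raise the degree, while `b^p` has larger degree than `b` unless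
`b` is a scalar. -/
theorem eq_zero_of_pow_dvd_iterate {K : Type*} [CommRing K] [IsDomain K] {p : ℕ} (hp : 2 ≤ p)
    (i : Fin 2) {b : MvPolynomial (Fin 2) K} (h : b ^ p ∣ (pderiv i)^[p - 1] b) :
    (pderiv i)^[p - 1] b = 0 := by
  by_contra hc
  have hdeg (n : ℕ) : ((pderiv i)^[n] b).totalDegree ≤ b.totalDegree := by
    induction n with
    | zero => rfl
    | succ n ih =>
      rw [Function.iterate_succ_apply']
      exact (totalDegree_pderiv_le _ _).trans ih
  have hb : b ≠ 0 := by
    rintro rfl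
    exact hc (by simp [iterate_map_zero])
  obtain ⟨q, hq⟩ := h
  have hq0 : q ≠ 0 := by
    rintro rfl
    exact hc (by simpa using hq)
  have h1 := hdeg (p - 1)
  rw [hq, show b ^ p * q = b * (b * (b ^ (p - 2) * q)) by
      rw [← mul_assoc, ← mul_assoc, ← pow_two, ← pow_add, Nat.add_sub_cancel' hp],
    totalDegree_mul_of_isDomain hb (mul_ne_zero hb (mul_ne_zero (pow_ne_zero _ hb) hq0)),
    totalDegree_mul_of_isDomain hb (mul_ne_zero (pow_ne_zero _ hb) hq0)] at h1
  have hb0 : b.totalDegree = 0 := by omega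
  rw [totalDegree_eq_zero_iff_eq_C] at hb0
  apply hc
  rw [hb0, show p - 1 = (p - 2) + 1 by omega, Function.iterate_succ_apply, pderiv_C,
    iterate_map_zero]

/-! ### Divergence-free derivations -/

/-- Corollary 3.  `K` a UFD of characteristic `p > 0`.  If `d` is a
`K`-derivation of `K[x,y]` with `d(x), d(y)` coprime, zero divergence, and
`K[x,y]^d ≠ K[x^p,y^p]`, then `d` is a Jacobian derivation `d = d_f`. -/
theorem corollary3_jacobian_of_nontrivial_constants
    {K : Type*} [CommRing K] [IsDomain K] [UniqueFactorizationMonoid K]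
    (p : ℕ) [Fact p.Prime] [CharP K p]
    (d : Derivation K (MvPolynomial (Fin 2) K) (MvPolynomial (Fin 2) K))
    (hcop : ∀ q : MvPolynomial (Fin 2) K, q ∣ d (X 0) → q ∣ d (X 1) → IsUnit q)
    (hdiv : pderiv (0 : Fin 2) (d (X 0)) + pderiv (1 : Fin 2) (d (X 1)) = 0)
    (hne : {q : MvPolynomial (Fin 2) K | d q = 0} ≠
      ↑(Algebra.adjoin K ({X 0 ^ p, X 1 ^ p} : Set (MvPolynomial (Fin 2) K)))) :
    ∃ f : MvPolynomial (Fin 2) K, ∀ g,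
      d g = pderiv (0 : Fin 2) f * pderiv (1 : Fin 2) g
          - pderiv (1 : Fin 2) f * pderiv (0 : Fin 2) g := by
  have hp : p.Prime := Fact.out
  obtain ⟨n, hn⟩ : ∃ n, p = n + 1 := ⟨p - 1, by have := hp.pos; omega⟩
  have hn1 : p - 1 = n := by omega
  set a := d (X 0) with ha
  set b := d (X 1) with hb
  -- By `hne`, some constant `h` of `d` has nonzero differential.
  obtain ⟨h, hdh, hh⟩ : ∃ h, d h = 0 ∧ ¬ (pderiv 0 h = 0 ∧ pderiv 1 h = 0) := by
    by_contra! hcon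
    refine hne (Set.Subset.antisymm ?_ ?_)
    · intro q hq
      exact mem_adjoin_of_pderiv_eq_zero p (hcon q hq).1 (hcon q hq).2
    · intro q hq
      change d q = 0
      induction hq using Algebra.adjoin_induction with
      | mem x hx => rcases hx with rfl | rfl <;> simp [Derivation.leibniz_pow]
      | algebraMap r => simp
      | add x y _ _ hx hy => simp [hx, hy]
      | mul x y _ _ hx hy => simp [hx, hy]
  -- The derivations `d` and `d^p` both kill `h`, whose gradient is a nonzero vector, so the
  -- determinant of their coefficient vectors vanishes.
  have hprop : b * d^[p] (X 0) - a * d^[p] (X 1) = 0 := by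
    have h1 := derivation_eq_pderiv d h
    have h2 := derivation_eq_pderiv (frobDerivation p d) h
    simp only [frobDerivation_apply] at h2
    rw [hdh, ← ha, ← hb] at h1
    rw [hn, Function.iterate_succ_apply, hdh, iterate_map_zero, ← hn] at h2
    by_contra hc
    refine hh ⟨?_, ?_⟩
    · refine (mul_eq_zero.1 (?_ : (b * d^[p] (X 0) - a * d^[p] (X 1)) * _ = 0)).resolve_left hc
      linear_combination d^[p] (X 1) * h1 - b * h2
    · refine (mul_eq_zero.1 (?_ : (b * d^[p] (X 0) - a * d^[p] (X 1)) * _ = 0)).resolve_left hc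
      linear_combination a * h2 - d^[p] (X 0) * h1
  have hba : pderiv 1 b = - pderiv 0 a := by linear_combination hdiv
  have hcomm (i j : Fin 2) (n : ℕ) (g : MvPolynomial (Fin 2) K) :
      pderiv i ((pderiv j)^[n] g) = (pderiv j)^[n] (pderiv i g) :=
    (Function.Commute.iterate_right (f := pderiv i) (g := pderiv j) (pderiv_comm i j) n).eq g
  have hneg (i : Fin 2) (g : MvPolynomial (Fin 2) K) :
      (pderiv i)^[n] (-g) = - (pderiv i)^[n] g := iterate_map_neg _ _ _
  have hsucc (i : Fin 2) (g : MvPolynomial (Fin 2) K) : (pderiv i)^[n] (pderiv i g) = 0 := by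
    rw [← Function.iterate_succ_apply, ← iterate_pderiv_char p i g, hn]
  set B := (pderiv 0)^[n] b with hB
  set A := (pderiv 1)^[n] a with hA
  have hB0 : pderiv 0 B = 0 := by rw [hB, hcomm, hsucc]
  have hB1 : pderiv 1 B = 0 := by rw [hB, hcomm, hba, hneg, hsucc, neg_zero]
  have hA1 : pderiv 1 A = 0 := by rw [hA, hcomm, hsucc]
  have hA0 : pderiv 0 A = 0 := by
    rw [hA, hcomm, show pderiv 0 a = - pderiv 1 b by rw [hba, neg_neg], hneg, hsucc, neg_zero]
  have hdB : d B = 0 := by rw [derivation_eq_pderiv, hB0, hB1]; simp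
  have hdA : d A = 0 := by rw [derivation_eq_pderiv, hA0, hA1]; simp
  -- The closed form `b dx - a dy` is exact up to its Cartier part. The function `G` is an
  -- antiderivative along `y` which corrects the antiderivative `F` along `x` without changing
  -- its `x`-derivative.
  obtain ⟨f, hf0, hf1⟩ : ∃ f, pderiv 0 f = b + X 0 ^ n * B ∧ pderiv 1 f = - a - X 1 ^ n * A := by
    obtain ⟨F, hF, -⟩ := exists_antideriv p (pderiv 0) (pderiv_X_self (R := K) 0) b
    obtain ⟨G, hG, hG0⟩ := exists_antideriv p (pderiv 1) (pderiv_X_self (R := K) 1)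
      (- a - pderiv 1 F)
    rw [hn1] at hF hG
    have hG0 := hG0 (pderiv 0) (pderiv_comm 0 1) (pderiv_X_of_ne (by decide)) (by
      rw [map_sub, pderiv_comm, hF, map_neg, map_add, hba]
      simp [Derivation.leibniz_pow, ← hB, hB1])
    refine ⟨F + G, by rw [map_add, hF, hG0, add_zero], ?_⟩
    rw [map_add, hG, iterate_map_sub, hneg, hsucc]
    ring
  -- Evaluate `df = (b + x^(p-1) B) dx - (a + y^(p-1) A) dy` on `d`, where the part
  -- `b dx - a dy` vanishes, and apply `d^(p-1)`; the terms with `d^p` cancel by `hprop`.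
  have hkatz : B * a ^ p - A * b ^ p = 0 := by
    have h1 : d f = B * (X 0 ^ n * d (X 0)) - A * (X 1 ^ n * d (X 1)) := by
      rw [derivation_eq_pderiv d f, hf0, hf1, ← ha, ← hb]; ring
    have h2 : d^[n] (d f) = d^[p] f := by rw [hn, Function.iterate_succ_apply]
    have k0 := iterate_pow_pred_mul p d (X 0)
    have k1 := iterate_pow_pred_mul p d (X 1)
    rw [hn1] at k0 k1
    rw [h1, iterate_map_sub, iterate_const_mul d hdB, iterate_const_mul d hdA, k0, k1,
      ← frobDerivation_apply p d f, derivation_eq_pderiv (frobDerivation p d) f,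
      frobDerivation_apply, frobDerivation_apply, hf0, hf1, ← ha, ← hb] at h2
    linear_combination -h2 - hprop
  -- Coprimality turns `hkatz` into divisibilities which are impossible for degree reasons
  -- unless `A = B = 0`, and then `f` is a potential.
  have hrel : IsRelPrime a b := fun q h1 h2 => hcop q h1 h2
  have hBz : B = 0 := by
    have : b ^ p ∣ B := IsRelPrime.dvd_of_dvd_mul_right (z := a ^ p) hrel.symm.pow
      ⟨A, by linear_combination hkatz⟩
    rw [hB, ← hn1] at this ⊢
    exact eq_zero_of_pow_dvd_iterate hp.two_le 0 this
  have hAz : A = 0 := by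
    have : a ^ p ∣ A := IsRelPrime.dvd_of_dvd_mul_right (z := b ^ p) hrel.pow
      ⟨B, by linear_combination -hkatz⟩
    rw [hA, ← hn1] at this ⊢
    exact eq_zero_of_pow_dvd_iterate hp.two_le 1 this
  refine ⟨f, fun g => ?_⟩
  rw [derivation_eq_pderiv d g, hf0, hf1, hBz, hAz, ← ha, ← hb]
  ring
end

section
/- Let K be a UFD of characteristic p > 0 and let d be a nonzero K-derivation of K[x,y] with d* = 0, K[x,y]^d ≠ K[x^p,y^p], and d(x), d(y) coprime. Let g ∈ K[x,y] be such that g − g_{(p)} is nonzero, belongs to K[x,y]^d, and has minimal total degree among all nonzero polynomials of the form h − h_{(p)} (h ∈ K[x,y]) belonging to K[x,y]^d. Then ḡ = gcd(∂g/∂x, ∂g/∂y) belongs to K[x^p, y^p]. -/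
/-!
Write `a = d x` and `b = d y`, so that `d f = a f_x + b f_y`, and put `G = g - g_(p)`, which has the
same partial derivatives as `g`. Since `a G_x + b G_y = 0` with `a`, `b` coprime, there is `h` with
`G_x = h b` and `G_y = -h a` (`exists_hamiltonian_factor`), and `h` is associated to `gbar`.
Equality of the mixed partial derivatives of `G` gives `d h + h d* = 0`, hence `d h = 0`.
Moreover `deg h < deg G`, because `h` divides a nonzero partial derivative of `G`. As `d` kills
`h_(p)`, the minimality of `deg G` forces `h - h_(p) = 0`, i.e. `h ∈ K[x^p, y^p]`; the units of
`K[x, y]` being constants, `gbar` lies there as well.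
-/

open MvPolynomial

/-- `f_{(p)}`: the coefficient `a₀₀ ∈ K[x^p,y^p]` in the unique representation
`f = Σ_{0≤i,j<p} a_{ij} x^i y^j` with `a_{ij} ∈ K[x^p,y^p]`; concretely it is the
sum of the monomials of `f` in which both exponents are divisible by `p`. -/
noncomputable def pPart {K : Type*} [CommRing K] (p : ℕ)
    (f : MvPolynomial (Fin 2) K) : MvPolynomial (Fin 2) K :=
  ∑ m ∈ f.support.filter (fun m => ∀ i, p ∣ m i), monomial m (coeff m f)

section Helpers

variable {K : Type*} [CommRing K]

theorem pPart_mem_adjoin (p : ℕ) (f : MvPolynomial (Fin 2) K) :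
    pPart p f ∈ Algebra.adjoin K ({X 0 ^ p, X 1 ^ p} : Set (MvPolynomial (Fin 2) K)) := by
  refine Subalgebra.sum_mem _ fun m hm => ?_
  have hm' := (Finset.mem_filter.1 hm).2
  obtain ⟨u, hu⟩ := hm' 0
  obtain ⟨v, hv⟩ := hm' 1
  rw [monomial_eq, Finsupp.prod_fintype _ _ (by simp), Fin.prod_univ_two, hu, hv, pow_mul, pow_mul]
  refine mul_mem (Subalgebra.algebraMap_mem _ _) (mul_mem (pow_mem ?_ _) (pow_mem ?_ _))
  · exact Algebra.subset_adjoin (by simp)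
  · exact Algebra.subset_adjoin (by simp)

theorem derivation_eq_zero_of_mem_adjoin (p : ℕ) [CharP K p]
    (D : Derivation K (MvPolynomial (Fin 2) K) (MvPolynomial (Fin 2) K))
    {f : MvPolynomial (Fin 2) K}
    (hf : f ∈ Algebra.adjoin K ({X 0 ^ p, X 1 ^ p} : Set (MvPolynomial (Fin 2) K))) :
    D f = 0 := by
  have hpow (q : MvPolynomial (Fin 2) K) : D (q ^ p) = 0 := by
    rw [D.leibniz_pow, nsmul_eq_mul, CharP.cast_eq_zero, zero_mul]
  have : Set.EqOn D (0 : Derivation K (MvPolynomial (Fin 2) K) (MvPolynomial (Fin 2) K))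
      ({X 0 ^ p, X 1 ^ p} : Set (MvPolynomial (Fin 2) K)) := by
    rintro q (rfl | rfl) <;> simp only [hpow, Derivation.zero_apply]
  exact Derivation.eqOn_adjoin this hf

theorem derivation_eq_pderiv_combination
    (D : Derivation K (MvPolynomial (Fin 2) K) (MvPolynomial (Fin 2) K))
    (f : MvPolynomial (Fin 2) K) :
    D f = D (X 0) * pderiv 0 f + D (X 1) * pderiv 1 f := by
  have : D = D (X 0) • pderiv 0 + D (X 1) • pderiv 1 := by
    refine derivation_ext fun i => ?_
    fin_cases i <;> simp
  simpa using congrArg (fun E => E f) this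

theorem pderiv_zero_one_comm (f : MvPolynomial (Fin 2) K) :
    pderiv 1 (pderiv 0 f) = pderiv 0 (pderiv 1 f) := by
  ext m
  simp only [coeff_pderiv, Finsupp.add_apply]
  rw [add_right_comm]
  simp
  ring

theorem totalDegree_sub_pPart_le (p : ℕ) (f : MvPolynomial (Fin 2) K) :
    (f - pPart p f).totalDegree ≤ f.totalDegree := by
  classical
  refine (totalDegree_sub _ _).trans (max_le le_rfl ?_)
  refine totalDegree_finsetSum_le fun m hm => ?_
  exact (totalDegree_monomial_le _ _).trans (le_totalDegree (Finset.mem_filter.1 hm).1)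

theorem totalDegree_pderiv_lt {i : Fin 2} {f : MvPolynomial (Fin 2) K} (hf : pderiv i f ≠ 0) :
    (pderiv i f).totalDegree < f.totalDegree := by
  have key : ∀ m ∈ (pderiv i f).support, (m.sum fun _ e => e) + 1 ≤ f.totalDegree := by
    intro m hm
    have hm' : m + Finsupp.single i 1 ∈ f.support := by
      rw [mem_support_iff, coeff_pderiv] at *
      exact left_ne_zero_of_mul hm
    have := le_totalDegree hm'
    rwa [Finsupp.sum_add_index' (by simp) (by simp), Finsupp.sum_single_index rfl] at this
  obtain ⟨m₀, hm₀⟩ := support_nonempty.2 hf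
  have h0 : 0 < f.totalDegree := (Nat.succ_pos _).trans_le (key m₀ hm₀)
  exact (Finset.sup_lt_iff h0).2 fun m hm => key m hm

/-- A polynomial over a domain of characteristic `p` with vanishing partial derivatives only
involves exponents divisible by `p`. -/
theorem sub_pPart_eq_zero_of_pderiv_eq_zero [IsDomain K] (p : ℕ) [CharP K p]
    {f : MvPolynomial (Fin 2) K} (hf : ∀ i, pderiv i f = 0) : f - pPart p f = 0 := by
  have hall : f.support.filter (fun m => ∀ i, p ∣ m i) = f.support := by
    refine Finset.filter_true_of_mem fun m hm i => ?_
    by_cases hmi : m i = 0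
    · simp [hmi]
    have hc := coeff_pderiv (i := i) f (m - Finsupp.single i 1)
    rw [hf i, coeff_zero, Finsupp.sub_add_single_one_cancel hmi] at hc
    have hcast := (mul_eq_zero.1 hc.symm).resolve_left (mem_support_iff.1 hm)
    rw [← CharP.cast_eq_zero_iff K p]
    have he : (m - Finsupp.single i 1 : Fin 2 →₀ ℕ) i + 1 = m i := by
      simp
      omega
    rw [← he]
    exact_mod_cast hcast
  rw [pPart, hall, ← f.as_sum, sub_self]

end Helpers

/-- A vector `(u, v)` orthogonal to a coprime pair `(a, b)` is a multiple of `(b, -a)`. -/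
theorem exists_hamiltonian_factor {R : Type*} [CommRing R] [IsDomain R]
    [UniqueFactorizationMonoid R] {a b u v : R} (hcop : IsRelPrime a b)
    (h : a * u + b * v = 0) : ∃ c, u = c * b ∧ v = -(c * a) := by
  by_cases ha : a = 0
  · subst ha
    obtain ⟨w, rfl⟩ : IsUnit b := hcop (dvd_zero _) dvd_rfl
    refine ⟨u * ↑w⁻¹, by simp, ?_⟩
    simpa using h
  · have hdvd : a ∣ b * v := ⟨-u, by linear_combination h⟩
    obtain ⟨c, rfl⟩ := hcop.dvd_of_dvd_mul_left hdvd
    refine ⟨-c, mul_left_cancel₀ ha (by linear_combination h), by ring⟩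

/-- Lemma 3 b).  Under the hypotheses of Lemma 3, the gcd
`ḡ = gcd(∂g/∂x, ∂g/∂y)` belongs to `K[x^p,y^p]`. -/
theorem lemma3b_gbar_in_constants
    {K : Type*} [CommRing K] [IsDomain K] [UniqueFactorizationMonoid K]
    (p : ℕ) [Fact p.Prime] [CharP K p]
    (d : Derivation K (MvPolynomial (Fin 2) K) (MvPolynomial (Fin 2) K))
    (hd : d ≠ 0)
    (hdiv : pderiv (0 : Fin 2) (d (X 0)) + pderiv (1 : Fin 2) (d (X 1)) = 0)
    (hne : {q : MvPolynomial (Fin 2) K | d q = 0} ≠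
      ↑(Algebra.adjoin K ({X 0 ^ p, X 1 ^ p} : Set (MvPolynomial (Fin 2) K))))
    (hcop : ∀ q : MvPolynomial (Fin 2) K, q ∣ d (X 0) → q ∣ d (X 1) → IsUnit q)
    (g : MvPolynomial (Fin 2) K)
    (hg₁ : g - pPart p g ≠ 0)
    (hg₂ : d (g - pPart p g) = 0)
    (hgmin : ∀ h : MvPolynomial (Fin 2) K, h - pPart p h ≠ 0 → d (h - pPart p h) = 0 →
      (g - pPart p g).totalDegree ≤ (h - pPart p h).totalDegree)
    (gbar : MvPolynomial (Fin 2) K)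
    (hgbar₁ : gbar ∣ pderiv (0 : Fin 2) g)
    (hgbar₂ : gbar ∣ pderiv (1 : Fin 2) g)
    (hgbar₃ : ∀ q : MvPolynomial (Fin 2) K,
      q ∣ pderiv (0 : Fin 2) g → q ∣ pderiv (1 : Fin 2) g → q ∣ gbar) :
    gbar ∈ Algebra.adjoin K ({X 0 ^ p, X 1 ^ p} : Set (MvPolynomial (Fin 2) K)) := by
  set G := g - pPart p g with hG
  have hGd (i : Fin 2) : pderiv i G = pderiv i g := by
    rw [hG, map_sub, derivation_eq_zero_of_mem_adjoin p _ (pPart_mem_adjoin p g), sub_zero]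
  rw [← hGd] at hgbar₁ hgbar₂
  simp only [← hGd] at hgbar₃
  obtain ⟨h, hx, hy⟩ : ∃ h, pderiv 0 G = h * d (X 1) ∧ pderiv 1 G = -(h * d (X 0)) :=
    exists_hamiltonian_factor (fun q => hcop q)
      (by rw [← derivation_eq_pderiv_combination, hg₂])
  have hndeg : ∃ i, pderiv i G ≠ 0 := by
    by_contra! hz
    exact hg₁ (sub_pPart_eq_zero_of_pderiv_eq_zero p fun i => by rw [← hGd, hz])
  have hdvd (i : Fin 2) : h ∣ pderiv i G := by
    fin_cases i
    · exact ⟨_, hx⟩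
    · exact ⟨-d (X 0), by simpa using hy⟩
  have hh0 : h ≠ 0 := by
    rintro rfl
    obtain ⟨i, hi⟩ := hndeg
    exact hi (zero_dvd_iff.1 (hdvd i))
  -- The mixed partial derivatives of `G` agree, which reads `d h + h * d* = 0`.
  have hdh : d h = 0 := by
    have hc := pderiv_zero_one_comm G
    rw [hx, hy, map_neg, pderiv_mul, pderiv_mul] at hc
    rw [derivation_eq_pderiv_combination d h]
    linear_combination hc - h * hdiv
  have hdeg : h.totalDegree < G.totalDegree := by
    obtain ⟨i, hi⟩ := hndeg
    obtain ⟨c, hc⟩ := hdvd i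
    have hlt := totalDegree_pderiv_lt hi
    have hc0 : c ≠ 0 := by
      rintro rfl
      exact hi (by rw [hc, mul_zero])
    rw [hc, totalDegree_mul_of_isDomain hh0 hc0] at hlt
    omega
  have hhp : h - pPart p h = 0 := by
    by_contra hne0
    have hle := hgmin h hne0 (by
      rw [map_sub, hdh, derivation_eq_zero_of_mem_adjoin p d (pPart_mem_adjoin p h), sub_zero])
    exact absurd (hle.trans (totalDegree_sub_pPart_le p h)) (not_le.2 hdeg)
  have hmem : h ∈ Algebra.adjoin K ({X 0 ^ p, X 1 ^ p} : Set (MvPolynomial (Fin 2) K)) := by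
    rw [sub_eq_zero.1 hhp]
    exact pPart_mem_adjoin p h
  obtain ⟨k, rfl⟩ := hgbar₃ h (hdvd 0) (hdvd 1)
  rw [hx] at hgbar₁
  rw [hy, dvd_neg] at hgbar₂
  have hk : IsUnit k :=
    hcop k ((mul_dvd_mul_iff_left hh0).1 hgbar₂) ((mul_dvd_mul_iff_left hh0).1 hgbar₁)
  obtain ⟨r, -, rfl⟩ := isUnit_iff_eq_C_of_isReduced.1 hk
  exact mul_mem hmem (Subalgebra.algebraMap_mem _ r)
end
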